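/- arXiv:math/0208139 — 2 statements merged into one kernel-verified Lean document; each statement's English description precedes it below -/
import Mathlib

section
/- If Re(s) ≥ 0, then |Im(s)|·‖w‖² ≤ (1+√R)·‖w‖² + (1+√R)·‖w‖·‖H‖. -/
open MeasureTheory Complex

noncomputable section

/-- Partial derivative in the first (x) variable. -/
def pdx (f : ℝ → ℝ → ℂ) : ℝ → ℝ → ℂ := fun x y => deriv (fun x' => f x' y) x

/-- Partial derivative in the second (y) variable. -/
def pdy (f : ℝ → ℝ → ℂ) : ℝ → ℝ → ℂ := fun x y => deriv (fun y' => f x y') y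

/-- Laplacian in the space variables. -/
def lap (f : ℝ → ℝ → ℂ) : ℝ → ℝ → ℂ := fun x y => pdx (pdx f) x y + pdy (pdy f) x y

/-- Square of the L² norm over Ω = [0,1] × [0,1]. -/
def nsq (f : ℝ → ℝ → ℂ) : ℝ := ∫ x in (0:ℝ)..(1:ℝ), ∫ y in (0:ℝ)..(1:ℝ), ‖f x y‖ ^ 2

/-- Smoothness of a function of two real variables. -/
def SmoothFn (f : ℝ → ℝ → ℂ) : Prop := ContDiff ℝ (⊤ : ℕ∞) (fun q : ℝ × ℝ => f q.1 q.2)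

/-- 1-periodicity in the first variable. -/
def PeriodicX (f : ℝ → ℝ → ℂ) : Prop := ∀ x y, f (x + 1) y = f x y

/-!
Pair the momentum equations with `w = (u, v)` in `L²(Ω)`. The pressure drops out because `w` is
divergence free, and the viscous term becomes `-‖Dw‖² / R`, so that
`s ‖w‖² + ⟨w, y ∂ₓw⟩ + ⟨u, v⟩ + ‖Dw‖² / R = ⟨w, H⟩`.
The advection term `⟨w, y ∂ₓw⟩` is purely imaginary by periodicity in `x`. Hence the real part
bounds `‖Dw‖` by `√R (‖w‖ + ‖H‖)`, and the imaginary part bounds `|Im s| ‖w‖²` by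
`‖w‖ ‖Dw‖ + ‖w‖² / 2 + ‖w‖ ‖H‖`.
-/

open Set Function ComplexConjugate

section CauchySchwarz

variable {α E 𝕜 : Type*} [MeasurableSpace α] {μ : Measure α} [RCLike 𝕜] [NormedAddCommGroup E]
  [InnerProductSpace 𝕜 E]

lemma norm_toLp_two_eq_sqrt_integral {f : α → E} (hf : MemLp f 2 μ) :
    ‖hf.toLp f‖ = √(∫ a, ‖f a‖ ^ 2 ∂μ) := by
  rw [Lp.norm_toLp, hf.eLpNorm_eq_integral_rpow_norm two_ne_zero ENNReal.ofNat_ne_top,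
    ENNReal.toReal_ofReal (by positivity), Real.sqrt_eq_rpow]
  norm_num

lemma norm_integral_inner_le_sqrt_mul_sqrt {f g : α → E} (hf : MemLp f 2 μ) (hg : MemLp g 2 μ) :
    ‖∫ a, inner 𝕜 (f a) (g a) ∂μ‖ ≤ √(∫ a, ‖f a‖ ^ 2 ∂μ) * √(∫ a, ‖g a‖ ^ 2 ∂μ) := by
  have inner_toLp : inner 𝕜 (hf.toLp f) (hg.toLp g) = ∫ a, inner 𝕜 (f a) (g a) ∂μ := by
    rw [L2.inner_def]
    refine integral_congr_ae ?_
    filter_upwards [hf.coeFn_toLp, hg.coeFn_toLp] with a hfa hga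
    rw [hfa, hga]
  rw [← inner_toLp, ← norm_toLp_two_eq_sqrt_integral hf, ← norm_toLp_two_eq_sqrt_integral hg]
  exact norm_inner_le_norm _ _

lemma sqrt_mul_sqrt_add_sqrt_mul_sqrt_le {a b c d : ℝ} (ha : 0 ≤ a) (hb : 0 ≤ b) (hc : 0 ≤ c)
    (hd : 0 ≤ d) : √a * √c + √b * √d ≤ √(a + b) * √(c + d) := by
  simpa using Real.sum_sqrt_mul_sqrt_le Finset.univ (f := ![a, b]) (g := ![c, d])
    (by simp [Fin.forall_fin_two, *]) (by simp [Fin.forall_fin_two, *])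

end CauchySchwarz

section PartialDerivatives

variable {f g : ℝ → ℝ → ℂ} {m n : WithTop ℕ∞}

lemma SmoothFn.contDiff (hf : SmoothFn f) (n : ℕ) :
    ContDiff ℝ n (uncurry f) :=
  ContDiff.of_le hf (mod_cast le_top)

lemma hasDerivAt_fst_fderiv (hf : Differentiable ℝ (uncurry f)) (x y : ℝ) :
    HasDerivAt (f · y) (fderiv ℝ (uncurry f) (x, y) (1, 0)) x :=
  (hf (x, y)).hasFDerivAt.comp_hasDerivAt (f := fun x' => (x', y)) x
    ((hasDerivAt_id x).prodMk (hasDerivAt_const x y))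

lemma hasDerivAt_snd_fderiv (hf : Differentiable ℝ (uncurry f)) (x y : ℝ) :
    HasDerivAt (f x) (fderiv ℝ (uncurry f) (x, y) (0, 1)) y :=
  (hf (x, y)).hasFDerivAt.comp_hasDerivAt (f := fun y' => (x, y')) y
    ((hasDerivAt_const y x).prodMk (hasDerivAt_id y))

lemma hasDerivAt_pdx (hf : Differentiable ℝ (uncurry f)) (x y : ℝ) :
    HasDerivAt (f · y) (pdx f x y) x :=
  (hasDerivAt_fst_fderiv hf x y).differentiableAt.hasDerivAt

lemma hasDerivAt_pdy (hf : Differentiable ℝ (uncurry f)) (x y : ℝ) :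
    HasDerivAt (f x) (pdy f x y) y :=
  (hasDerivAt_snd_fderiv hf x y).differentiableAt.hasDerivAt

lemma contDiff_pdx (hf : ContDiff ℝ n (uncurry f)) (hmn : m + 1 ≤ n) :
    ContDiff ℝ m (uncurry (pdx f)) := by
  have hdiff := hf.differentiable (by rintro rfl; simp at hmn)
  have huncurry : uncurry (pdx f) = fun q => fderiv ℝ (uncurry f) q (1, 0) :=
    funext fun q => (hasDerivAt_fst_fderiv hdiff q.1 q.2).deriv
  rw [huncurry]
  exact (hf.fderiv_right hmn).clm_apply contDiff_const

lemma contDiff_pdy (hf : ContDiff ℝ n (uncurry f)) (hmn : m + 1 ≤ n) :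
    ContDiff ℝ m (uncurry (pdy f)) := by
  have hdiff := hf.differentiable (by rintro rfl; simp at hmn)
  have huncurry : uncurry (pdy f) = fun q => fderiv ℝ (uncurry f) q (0, 1) :=
    funext fun q => (hasDerivAt_snd_fderiv hdiff q.1 q.2).deriv
  rw [huncurry]
  exact (hf.fderiv_right hmn).clm_apply contDiff_const

lemma continuous_pdx (hf : ContDiff ℝ 1 (uncurry f)) : Continuous (uncurry (pdx f)) :=
  (contDiff_pdx (m := 0) hf (by simp)).continuous

lemma continuous_pdy (hf : ContDiff ℝ 1 (uncurry f)) : Continuous (uncurry (pdy f)) :=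
  (contDiff_pdy (m := 0) hf (by simp)).continuous

lemma continuous_lap (hf : ContDiff ℝ 2 (uncurry f)) : Continuous (uncurry (lap f)) :=
  (continuous_pdx (contDiff_pdx hf (by norm_num))).add
    (continuous_pdy (contDiff_pdy hf (by norm_num)))

lemma pdx_conj_mul (hf : Differentiable ℝ (uncurry f)) (hg : Differentiable ℝ (uncurry g))
    (x y : ℝ) :
    pdx (fun x y => conj (f x y) * g x y) x y
      = conj (pdx f x y) * g x y + conj (f x y) * pdx g x y :=
  ((hasDerivAt_pdx hf x y).star.mul (hasDerivAt_pdx hg x y)).deriv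

lemma pdy_conj_mul (hf : Differentiable ℝ (uncurry f)) (hg : Differentiable ℝ (uncurry g))
    (x y : ℝ) :
    pdy (fun x y => conj (f x y) * g x y) x y
      = conj (pdy f x y) * g x y + conj (f x y) * pdy g x y :=
  ((hasDerivAt_pdy hf x y).star.mul (hasDerivAt_pdy hg x y)).deriv

lemma PeriodicX.pdx (hf : PeriodicX f) : PeriodicX (pdx f) := fun x y => by
  simp only [_root_.pdx]
  rw [← deriv_comp_add_const (f · y) 1 x]
  simp only [hf _ y]

end PartialDerivatives

section UnitSquare

variable {E : Type*} [NormedAddCommGroup E] {f : ℝ → ℝ → ℂ}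

/-- The domain `Ω = [0,1] × [0,1]`. -/
def unitSquare : Set (ℝ × ℝ) := Icc 0 1 ×ˢ Icc 0 1

lemma measurableSet_unitSquare : MeasurableSet unitSquare :=
  measurableSet_Icc.prod measurableSet_Icc

lemma integrableOn_unitSquare {φ : ℝ × ℝ → E} (hφ : Continuous φ) : IntegrableOn φ unitSquare :=
  hφ.continuousOn.integrableOn_compact (isCompact_Icc.prod isCompact_Icc)

lemma memLp_two_unitSquare {φ : ℝ × ℝ → E} (hφ : Continuous φ) :
    MemLp φ 2 (volume.restrict unitSquare) :=
  (memLp_two_iff_integrable_sq_norm hφ.aestronglyMeasurable).2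
    (integrableOn_unitSquare (by fun_prop))

variable [NormedSpace ℝ E]

lemma setIntegral_unitSquare {φ : ℝ × ℝ → E} (hφ : Continuous φ) :
    ∫ q in unitSquare, φ q = ∫ x in (0 : ℝ)..1, ∫ y in (0 : ℝ)..1, φ (x, y) := by
  simp only [intervalIntegral.integral_of_le zero_le_one, ← integral_Icc_eq_integral_Ioc]
  exact setIntegral_prod φ (integrableOn_unitSquare hφ)

lemma setIntegral_unitSquare_symm {φ : ℝ × ℝ → E} (hφ : Continuous φ) :
    ∫ q in unitSquare, φ q = ∫ y in (0 : ℝ)..1, ∫ x in (0 : ℝ)..1, φ (x, y) := by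
  have hswap : ∫ q in unitSquare, φ q.swap = ∫ q in unitSquare, φ q :=
    setIntegral_prod_swap (Icc 0 1) (Icc 0 1) φ
  rw [← hswap]
  exact setIntegral_unitSquare (hφ.comp continuous_swap)

lemma setIntegral_pdx_eq_zero (hf : ContDiff ℝ 1 (uncurry f)) (hper : PeriodicX f) :
    ∫ q in unitSquare, uncurry (pdx f) q = 0 := by
  have hcont := continuous_pdx hf
  have inner_integral (y : ℝ) : ∫ x in (0 : ℝ)..1, pdx f x y = 0 := by
    rw [intervalIntegral.integral_eq_sub_of_hasDerivAt
      (fun x _ => hasDerivAt_pdx (hf.differentiable one_ne_zero) x y)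
      ((hcont.comp (Continuous.prodMk_left y)).intervalIntegrable _ _), sub_eq_zero]
    simpa using hper 0 y
  simp [setIntegral_unitSquare_symm hcont, inner_integral]

lemma setIntegral_pdy_eq_zero (hf : ContDiff ℝ 1 (uncurry f)) (hwall : ∀ x, f x 0 = f x 1) :
    ∫ q in unitSquare, uncurry (pdy f) q = 0 := by
  have hcont := continuous_pdy hf
  have inner_integral (x : ℝ) : ∫ y in (0 : ℝ)..1, pdy f x y = 0 := by
    rw [intervalIntegral.integral_eq_sub_of_hasDerivAt
      (fun y _ => hasDerivAt_pdy (hf.differentiable one_ne_zero) x y)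
      ((hcont.comp (Continuous.prodMk_right x)).intervalIntegrable _ _), sub_eq_zero]
    exact (hwall x).symm
  simp [setIntegral_unitSquare hcont, inner_integral]

end UnitSquare

section SqInner

variable {f g h : ℝ → ℝ → ℂ}

/-- The `L²(Ω)` inner product of two scalar functions, conjugate-linear in the first one. -/
def sqInner (f g : ℝ → ℝ → ℂ) : ℂ := ∫ q in unitSquare, conj (f q.1 q.2) * g q.1 q.2

lemma continuous_conj_mul (hf : Continuous (uncurry f)) (hg : Continuous (uncurry g)) :
    Continuous fun q : ℝ × ℝ => conj (f q.1 q.2) * g q.1 q.2 :=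
  (continuous_conj.comp hf).mul hg

lemma contDiff_conj_mul {n : WithTop ℕ∞} (hf : ContDiff ℝ n (uncurry f))
    (hg : ContDiff ℝ n (uncurry g)) :
    ContDiff ℝ n (uncurry fun x y => conj (f x y) * g x y) :=
  (conjCLE.contDiff.comp hf).mul hg

lemma sqInner_congr_right (hgh : ∀ x ∈ Icc (0 : ℝ) 1, ∀ y ∈ Icc (0 : ℝ) 1, g x y = h x y) :
    sqInner f g = sqInner f h :=
  setIntegral_congr_fun measurableSet_unitSquare fun q hq => by
    simp only [hgh q.1 hq.1 q.2 hq.2]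

lemma sqInner_conj_symm : conj (sqInner f g) = sqInner g f := by
  simp only [sqInner, ← integral_conj, map_mul, conj_conj, mul_comm]

lemma sqInner_add_right (hf : Continuous (uncurry f)) (hg : Continuous (uncurry g))
    (hh : Continuous (uncurry h)) : sqInner f (g + h) = sqInner f g + sqInner f h := by
  simp only [sqInner, Pi.add_apply, mul_add]
  exact integral_add (integrableOn_unitSquare (continuous_conj_mul hf hg))
    (integrableOn_unitSquare (continuous_conj_mul hf hh))

lemma sqInner_smul_right (c : ℂ) : sqInner f (c • g) = c * sqInner f g := by
  simp only [sqInner, Pi.smul_apply, smul_eq_mul, mul_left_comm _ c, integral_const_mul]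

lemma nsq_eq_setIntegral (hf : Continuous (uncurry f)) :
    nsq f = ∫ q in unitSquare, ‖uncurry f q‖ ^ 2 :=
  (setIntegral_unitSquare (hf.norm.pow 2)).symm

lemma nsq_nonneg (f : ℝ → ℝ → ℂ) : 0 ≤ nsq f :=
  intervalIntegral.integral_nonneg zero_le_one fun _ _ =>
    intervalIntegral.integral_nonneg zero_le_one fun _ _ => sq_nonneg _

lemma nsq_le_nsq (hf : Continuous (uncurry f)) (hg : Continuous (uncurry g))
    (hfg : ∀ x ∈ Icc (0 : ℝ) 1, ∀ y ∈ Icc (0 : ℝ) 1, ‖f x y‖ ≤ ‖g x y‖) : nsq f ≤ nsq g := by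
  rw [nsq_eq_setIntegral hf, nsq_eq_setIntegral hg]
  refine setIntegral_mono_on (integrableOn_unitSquare (by fun_prop))
    (integrableOn_unitSquare (by fun_prop)) measurableSet_unitSquare fun q hq => ?_
  exact pow_le_pow_left₀ (norm_nonneg _) (hfg q.1 hq.1 q.2 hq.2) 2

lemma sqInner_self (hf : Continuous (uncurry f)) : sqInner f f = nsq f := by
  simp only [nsq_eq_setIntegral hf, sqInner, conj_mul', ← integral_complex_ofReal, ofReal_pow,
    uncurry]

lemma norm_sqInner_le (hf : Continuous (uncurry f)) (hg : Continuous (uncurry g)) :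
    ‖sqInner f g‖ ≤ √(nsq f) * √(nsq g) := by
  rw [nsq_eq_setIntegral hf, nsq_eq_setIntegral hg]
  simpa only [RCLike.inner_apply', sqInner, uncurry] using
    norm_integral_inner_le_sqrt_mul_sqrt (𝕜 := ℂ) (memLp_two_unitSquare hf)
      (memLp_two_unitSquare hg)

lemma norm_sqInner_add_sqInner_le {u v F G : ℝ → ℝ → ℂ} (hu : Continuous (uncurry u))
    (hv : Continuous (uncurry v)) (hF : Continuous (uncurry F)) (hG : Continuous (uncurry G)) :
    ‖sqInner u F + sqInner v G‖ ≤ √(nsq u + nsq v) * √(nsq F + nsq G) :=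
  (norm_add_le_of_le (norm_sqInner_le hu hF) (norm_sqInner_le hv hG)).trans
    (sqrt_mul_sqrt_add_sqrt_mul_sqrt_le (nsq_nonneg u) (nsq_nonneg v) (nsq_nonneg F) (nsq_nonneg G))

lemma norm_sqInner_le_half_add (hf : Continuous (uncurry f)) (hg : Continuous (uncurry g)) :
    ‖sqInner f g‖ ≤ (nsq f + nsq g) / 2 := by
  have young := two_mul_le_add_sq (√(nsq f)) (√(nsq g))
  rw [Real.sq_sqrt (nsq_nonneg f), Real.sq_sqrt (nsq_nonneg g)] at young
  linarith [norm_sqInner_le hf hg]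

lemma sqInner_pdx_right (hf : ContDiff ℝ 1 (uncurry f)) (hg : ContDiff ℝ 1 (uncurry g))
    (hfper : PeriodicX f) (hgper : PeriodicX g) :
    sqInner f (pdx g) = -sqInner (pdx f) g := by
  have hzero := setIntegral_pdx_eq_zero (contDiff_conj_mul hf hg)
    fun x y => by rw [hfper, hgper]
  simp only [uncurry, pdx_conj_mul (hf.differentiable one_ne_zero)
    (hg.differentiable one_ne_zero)] at hzero
  rw [integral_add (integrableOn_unitSquare (continuous_conj_mul (continuous_pdx hf) hg.continuous))
    (integrableOn_unitSquare (continuous_conj_mul hf.continuous (continuous_pdx hg)))] at hzero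
  exact eq_neg_of_add_eq_zero_right hzero

lemma sqInner_pdy_right (hf : ContDiff ℝ 1 (uncurry f)) (hg : ContDiff ℝ 1 (uncurry g))
    (hbot : ∀ x, f x 0 = 0) (htop : ∀ x, f x 1 = 0) :
    sqInner f (pdy g) = -sqInner (pdy f) g := by
  have hzero := setIntegral_pdy_eq_zero (contDiff_conj_mul hf hg)
    fun x => by simp only [hbot, htop, map_zero, zero_mul]
  simp only [uncurry, pdy_conj_mul (hf.differentiable one_ne_zero)
    (hg.differentiable one_ne_zero)] at hzero
  rw [integral_add (integrableOn_unitSquare (continuous_conj_mul (continuous_pdy hf) hg.continuous))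
    (integrableOn_unitSquare (continuous_conj_mul hf.continuous (continuous_pdy hg)))] at hzero
  exact eq_neg_of_add_eq_zero_right hzero

lemma sqInner_gradient_eq_zero {u v p : ℝ → ℝ → ℂ} (hu : ContDiff ℝ 1 (uncurry u))
    (hv : ContDiff ℝ 1 (uncurry v)) (hp : ContDiff ℝ 1 (uncurry p)) (huper : PeriodicX u)
    (hpper : PeriodicX p) (hbot : ∀ x, v x 0 = 0) (htop : ∀ x, v x 1 = 0)
    (hdiv : ∀ x ∈ Icc (0 : ℝ) 1, ∀ y ∈ Icc (0 : ℝ) 1, pdx u x y + pdy v x y = 0) :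
    sqInner u (pdx p) + sqInner v (pdy p) = 0 := by
  have hdiv_pair : sqInner p (pdx u) + sqInner p (pdy v) = 0 := by
    have hzero : sqInner p (pdx u + pdy v) = sqInner p 0 := sqInner_congr_right hdiv
    rw [← sqInner_add_right hp.continuous (continuous_pdx hu) (continuous_pdy hv), hzero]
    simp [sqInner]
  rw [sqInner_pdx_right hu hp huper hpper, sqInner_pdy_right hv hp hbot htop,
    ← sqInner_conj_symm (f := p), ← sqInner_conj_symm (f := p), ← neg_add, ← map_add, hdiv_pair,
    map_zero, neg_zero]

end SqInner

/-- The squared `L²(Ω)` norm of the gradient of `f`; for `w = (u, v)`, `‖Dw‖²` is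
`gradNsq u + gradNsq v`. -/
def gradNsq (f : ℝ → ℝ → ℂ) : ℝ := nsq (pdx f) + nsq (pdy f)

lemma gradNsq_nonneg (f : ℝ → ℝ → ℂ) : 0 ≤ gradNsq f := add_nonneg (nsq_nonneg _) (nsq_nonneg _)

section ShearAdvection

variable {f : ℝ → ℝ → ℂ} {a : ℝ → ℝ}

/-- Advection `a(y) ∂f/∂x` of `f` by the parallel shear flow with velocity profile `a`; Couette flow
is `a = id`. -/
def shearAdvection (a : ℝ → ℝ) (f : ℝ → ℝ → ℂ) : ℝ → ℝ → ℂ := fun x y => a y * pdx f x y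

lemma continuous_shearAdvection (ha : Continuous a) (hf : ContDiff ℝ 1 (uncurry f)) :
    Continuous (uncurry (shearAdvection a f)) :=
  (continuous_ofReal.comp (ha.comp continuous_snd)).mul (continuous_pdx hf)

-- Integration by parts in `x` shows that `⟨f, a ∂ₓf⟩` equals minus its own conjugate.
lemma re_sqInner_shearAdvection (ha : ContDiff ℝ 1 a) (hf : ContDiff ℝ 1 (uncurry f))
    (hper : PeriodicX f) : (sqInner f (shearAdvection a f)).re = 0 := by
  let af : ℝ → ℝ → ℂ := fun x y => a y * f x y
  have haf : ContDiff ℝ 1 (uncurry af) :=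
    (ofRealCLM.contDiff.comp (ha.comp contDiff_snd)).mul hf
  have haf_per : PeriodicX af := fun x y => by simp only [af, hper x y]
  have hpdx : pdx af = shearAdvection a f := funext₂ fun x y =>
    ((hasDerivAt_pdx (hf.differentiable one_ne_zero) x y).const_mul (a y : ℂ)).deriv
  have hmove : sqInner af (pdx f) = sqInner f (shearAdvection a f) := by
    simp only [sqInner, shearAdvection, af, map_mul, conj_ofReal]
    simp only [mul_assoc, mul_left_comm]
  have hanti : sqInner f (shearAdvection a f) = -conj (sqInner f (shearAdvection a f)) := by
    conv_lhs => rw [← hpdx, sqInner_pdx_right hf haf hper haf_per, ← sqInner_conj_symm, hmove]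
  have hre := congrArg re hanti
  rw [neg_re, conj_re] at hre
  linarith

lemma norm_sqInner_shearAdvection_le (ha : Continuous a) (ha_le : ∀ y ∈ Icc (0 : ℝ) 1, |a y| ≤ 1)
    (hf : ContDiff ℝ 1 (uncurry f)) :
    ‖sqInner f (shearAdvection a f)‖ ≤ √(nsq f) * √(nsq (pdx f)) := by
  have hcont := continuous_shearAdvection ha hf
  have hnsq : nsq (shearAdvection a f) ≤ nsq (pdx f) :=
    nsq_le_nsq hcont (continuous_pdx hf) fun x _ y hy => by
      rw [shearAdvection, norm_mul, norm_real]
      exact mul_le_of_le_one_left (norm_nonneg _) (ha_le y hy)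
  exact (norm_sqInner_le hf.continuous hcont).trans (by gcongr)

lemma norm_sqInner_shearAdvection_add_le {u v : ℝ → ℝ → ℂ} (ha : Continuous a)
    (ha_le : ∀ y ∈ Icc (0 : ℝ) 1, |a y| ≤ 1) (hu : ContDiff ℝ 1 (uncurry u))
    (hv : ContDiff ℝ 1 (uncurry v)) :
    ‖sqInner u (shearAdvection a u) + sqInner v (shearAdvection a v)‖
      ≤ √(nsq u + nsq v) * √(gradNsq u + gradNsq v) := by
  have hcomponent {f : ℝ → ℝ → ℂ} (hf : ContDiff ℝ 1 (uncurry f)) :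
      ‖sqInner f (shearAdvection a f)‖ ≤ √(nsq f) * √(gradNsq f) := by
    refine (norm_sqInner_shearAdvection_le ha ha_le hf).trans ?_
    gcongr
    exact le_add_of_nonneg_right (nsq_nonneg _)
  exact (norm_add_le_of_le (hcomponent hu) (hcomponent hv)).trans
    (sqrt_mul_sqrt_add_sqrt_mul_sqrt_le (nsq_nonneg u) (nsq_nonneg v) (gradNsq_nonneg u)
      (gradNsq_nonneg v))

end ShearAdvection

/-- A velocity component in the channel: of class `C²`, `1`-periodic along the channel and zero on
the walls `y = 0` and `y = 1`. -/
structure IsNoSlipField (f : ℝ → ℝ → ℂ) : Prop where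
  contDiff : ContDiff ℝ 2 (uncurry f)
  periodicX : PeriodicX f
  bottom : ∀ x, f x 0 = 0
  top : ∀ x, f x 1 = 0

section NoSlip

variable {f r h : ℝ → ℝ → ℂ} {a : ℝ → ℝ}

lemma IsNoSlipField.contDiff_one (hf : IsNoSlipField f) : ContDiff ℝ 1 (uncurry f) :=
  hf.contDiff.of_le one_le_two

lemma IsNoSlipField.contDiff_pdx (hf : IsNoSlipField f) : ContDiff ℝ 1 (uncurry (pdx f)) :=
  _root_.contDiff_pdx hf.contDiff (by norm_num)

lemma IsNoSlipField.contDiff_pdy (hf : IsNoSlipField f) : ContDiff ℝ 1 (uncurry (pdy f)) :=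
  _root_.contDiff_pdy hf.contDiff (by norm_num)

lemma IsNoSlipField.sqInner_lap (hf : IsNoSlipField f) : sqInner f (lap f) = -gradNsq f := by
  have hlap : lap f = pdx (pdx f) + pdy (pdy f) := rfl
  rw [hlap, sqInner_add_right hf.contDiff.continuous (continuous_pdx hf.contDiff_pdx)
      (continuous_pdy hf.contDiff_pdy),
    sqInner_pdx_right hf.contDiff_one hf.contDiff_pdx hf.periodicX hf.periodicX.pdx,
    sqInner_pdy_right hf.contDiff_one hf.contDiff_pdy hf.bottom hf.top,
    sqInner_self hf.contDiff_pdx.continuous, sqInner_self hf.contDiff_pdy.continuous, gradNsq]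
  push_cast
  ring

lemma IsNoSlipField.energy_identity {s κ : ℂ} (hf : IsNoSlipField f) (ha : Continuous a)
    (hr : Continuous (uncurry r)) (hh : Continuous (uncurry h))
    (heq : ∀ x ∈ Icc (0 : ℝ) 1, ∀ y ∈ Icc (0 : ℝ) 1,
      s * f x y + shearAdvection a f x y + r x y = κ * lap f x y + h x y) :
    s * nsq f + sqInner f (shearAdvection a f) + sqInner f r + κ * gradNsq f = sqInner f h := by
  have hfc := hf.contDiff.continuous
  have hadv := continuous_shearAdvection ha hf.contDiff_one
  have hsf : Continuous (uncurry (s • f)) := hfc.const_smul s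
  have hsf_adv : Continuous (uncurry (s • f + shearAdvection a f)) := hsf.add hadv
  have hlap : Continuous (uncurry (κ • lap f)) := (continuous_lap hf.contDiff).const_smul κ
  have hpair : sqInner f (s • f + shearAdvection a f + r) = sqInner f (κ • lap f + h) :=
    sqInner_congr_right heq
  rw [sqInner_add_right hfc hsf_adv hr, sqInner_add_right hfc hsf hadv,
    sqInner_add_right hfc hlap hh, sqInner_smul_right,
    sqInner_smul_right, sqInner_self hfc, hf.sqInner_lap] at hpair
  linear_combination hpair

end NoSlip

/-- Classical solutions of the resolvent equations of linearized plane Couette flow: `(u, v)` is the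
velocity, `p` the pressure, `(F, G)` the forcing, `R` the Reynolds number and `s` the spectral
parameter. -/
structure IsCouetteResolventSolution (R : ℝ) (s : ℂ) (u v p F G : ℝ → ℝ → ℂ) : Prop where
  noSlip_u : IsNoSlipField u
  noSlip_v : IsNoSlipField v
  contDiff_p : ContDiff ℝ 1 (uncurry p)
  periodicX_p : PeriodicX p
  continuous_F : Continuous (uncurry F)
  continuous_G : Continuous (uncurry G)
  div_eq_zero : ∀ x ∈ Icc (0 : ℝ) 1, ∀ y ∈ Icc (0 : ℝ) 1, pdx u x y + pdy v x y = 0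
  momentum_x : ∀ x ∈ Icc (0 : ℝ) 1, ∀ y ∈ Icc (0 : ℝ) 1,
    s * u x y + y * pdx u x y + v x y + pdx p x y = (1 / (R : ℂ)) * lap u x y + F x y
  momentum_y : ∀ x ∈ Icc (0 : ℝ) 1, ∀ y ∈ Icc (0 : ℝ) 1,
    s * v x y + y * pdx v x y + pdy p x y = (1 / (R : ℂ)) * lap v x y + G x y

namespace IsCouetteResolventSolution

variable {R : ℝ} {s : ℂ} {u v p F G : ℝ → ℝ → ℂ}

lemma energy_identity (hw : IsCouetteResolventSolution R s u v p F G) :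
    s * (nsq u + nsq v : ℝ)
      + (sqInner u (shearAdvection id u) + sqInner v (shearAdvection id v)) + sqInner u v
      + ((gradNsq u + gradNsq v) / R : ℝ) = sqInner u F + sqInner v G := by
  have hvc := hw.noSlip_v.contDiff.continuous
  have hpx := continuous_pdx hw.contDiff_p
  have energy_u := hw.noSlip_u.energy_identity (a := id) (r := v + pdx p) continuous_id
    (hvc.add hpx) hw.continuous_F fun x hx y hy => by
      simpa only [shearAdvection, Pi.add_apply, id_eq, add_assoc] using hw.momentum_x x hx y hy
  have energy_v := hw.noSlip_v.energy_identity (a := id) continuous_id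
    (continuous_pdy hw.contDiff_p) hw.continuous_G hw.momentum_y
  have pressure := sqInner_gradient_eq_zero hw.noSlip_u.contDiff_one hw.noSlip_v.contDiff_one
    hw.contDiff_p hw.noSlip_u.periodicX hw.periodicX_p hw.noSlip_v.bottom hw.noSlip_v.top
    hw.div_eq_zero
  rw [sqInner_add_right hw.noSlip_u.contDiff.continuous hvc hpx] at energy_u
  push_cast
  linear_combination energy_u + energy_v - pressure

lemma gradNsq_add_le (hw : IsCouetteResolventSolution R s u v p F G) (hR : 0 < R)
    (hs : 0 ≤ s.re) :
    gradNsq u + gradNsq v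
      ≤ R * ((nsq u + nsq v) / 2 + √(nsq u + nsq v) * √(nsq F + nsq G)) := by
  have hu := hw.noSlip_u
  have hv := hw.noSlip_v
  have energy_re := congrArg re hw.energy_identity
  rw [add_re, add_re, add_re, re_mul_ofReal, ofReal_re, add_re (sqInner u (shearAdvection id u)),
    re_sqInner_shearAdvection contDiff_id hu.contDiff_one hu.periodicX,
    re_sqInner_shearAdvection contDiff_id hv.contDiff_one hv.periodicX] at energy_re
  have coupling := (abs_re_le_norm _).trans
    (norm_sqInner_le_half_add hu.contDiff.continuous hv.contDiff.continuous)
  have forcing := (re_le_norm _).trans (norm_sqInner_add_sqInner_le hu.contDiff.continuous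
    hv.contDiff.continuous hw.continuous_F hw.continuous_G)
  have growth : 0 ≤ s.re * (nsq u + nsq v) :=
    mul_nonneg hs (add_nonneg (nsq_nonneg u) (nsq_nonneg v))
  rw [← div_le_iff₀' hR]
  linarith [neg_le_of_abs_le coupling]

lemma sqrt_gradNsq_add_le (hw : IsCouetteResolventSolution R s u v p F G) (hR : 0 < R)
    (hs : 0 ≤ s.re) :
    √(gradNsq u + gradNsq v) ≤ √R * (√(nsq u + nsq v) + √(nsq F + nsq G)) := by
  rw [Real.sqrt_le_left (by positivity), mul_pow, Real.sq_sqrt hR.le]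
  refine (hw.gradNsq_add_le hR hs).trans (mul_le_mul_of_nonneg_left ?_ hR.le)
  have hW := Real.sq_sqrt (add_nonneg (nsq_nonneg u) (nsq_nonneg v))
  have hcross : 0 ≤ √(nsq u + nsq v) * √(nsq F + nsq G) := by positivity
  nlinarith [hcross, sq_nonneg (√(nsq F + nsq G)), sq_nonneg (√(nsq u + nsq v))]

lemma abs_im_mul_nsq_add_le (hw : IsCouetteResolventSolution R s u v p F G) :
    |s.im| * (nsq u + nsq v)
      ≤ √(nsq u + nsq v) * √(gradNsq u + gradNsq v) + (nsq u + nsq v) / 2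
        + √(nsq u + nsq v) * √(nsq F + nsq G) := by
  have hu := hw.noSlip_u.contDiff_one
  have hv := hw.noSlip_v.contDiff_one
  have energy_im := congrArg im hw.energy_identity
  rw [add_im, add_im, add_im, im_mul_ofReal, ofReal_im] at energy_im
  have advection := (abs_im_le_norm _).trans (norm_sqInner_shearAdvection_add_le continuous_id
    (fun y hy => (abs_of_nonneg hy.1).trans_le hy.2) hu hv)
  have coupling := (abs_im_le_norm _).trans
    (norm_sqInner_le_half_add hu.continuous hv.continuous)
  have forcing := (abs_im_le_norm _).trans (norm_sqInner_add_sqInner_le hu.continuous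
    hv.continuous hw.continuous_F hw.continuous_G)
  have hmul : |s.im| * (nsq u + nsq v) = |s.im * (nsq u + nsq v)| := by
    rw [abs_mul, abs_of_nonneg (add_nonneg (nsq_nonneg u) (nsq_nonneg v))]
  rw [hmul]
  rw [abs_le] at advection coupling forcing ⊢
  constructor <;> linarith

end IsCouetteResolventSolution

theorem imaginary_part_estimate_general {R : ℝ} {s : ℂ} {u v p F G : ℝ → ℝ → ℂ} (hR : 0 < R)
    (hw : IsCouetteResolventSolution R s u v p F G) (hs : 0 ≤ s.re) :
    |s.im| * (nsq u + nsq v)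
      ≤ (1 + √R) * (nsq u + nsq v)
        + (1 + √R) * (√(nsq u + nsq v) * √(nsq F + nsq G)) := by
  have hW : 0 ≤ nsq u + nsq v := add_nonneg (nsq_nonneg u) (nsq_nonneg v)
  calc |s.im| * (nsq u + nsq v)
      ≤ √(nsq u + nsq v) * √(gradNsq u + gradNsq v) + (nsq u + nsq v) / 2
        + √(nsq u + nsq v) * √(nsq F + nsq G) := hw.abs_im_mul_nsq_add_le
    _ ≤ √(nsq u + nsq v) * (√R * (√(nsq u + nsq v) + √(nsq F + nsq G))) + (nsq u + nsq v)
        + √(nsq u + nsq v) * √(nsq F + nsq G) := by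
      gcongr
      · exact hw.sqrt_gradNsq_add_le hR hs
      · exact half_le_self hW
    _ = (1 + √R) * (nsq u + nsq v)
        + (1 + √R) * (√(nsq u + nsq v) * √(nsq F + nsq G)) := by
      linear_combination √R * Real.mul_self_sqrt hW

/-- If Re(s) ≥ 0, then
|Im(s)|·‖w‖² ≤ (1+√R)·‖w‖² + (1+√R)·‖w‖·‖H‖. -/
theorem imaginary_part_estimate
    (R : ℝ) (hR : 0 < R) (s : ℂ)
    (u v p F G : ℝ → ℝ → ℂ)
    (hu : SmoothFn u) (hv : SmoothFn v) (hp : SmoothFn p) (hF : SmoothFn F) (hG : SmoothFn G)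
    (hup : PeriodicX u) (hvp : PeriodicX v) (hpp : PeriodicX p)
    (hFp : PeriodicX F) (hGp : PeriodicX G)
    (hub0 : ∀ x, u x 0 = 0) (hub1 : ∀ x, u x 1 = 0)
    (hvb0 : ∀ x, v x 0 = 0) (hvb1 : ∀ x, v x 1 = 0)
    (hdiv : ∀ x y, pdx u x y + pdy v x y = 0)
    (heq1 : ∀ x ∈ Set.Icc (0:ℝ) 1, ∀ y ∈ Set.Icc (0:ℝ) 1,
      s * u x y + (y:ℂ) * pdx u x y + v x y + pdx p x y
        = (1/(R:ℂ)) * lap u x y + F x y)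
    (heq2 : ∀ x ∈ Set.Icc (0:ℝ) 1, ∀ y ∈ Set.Icc (0:ℝ) 1,
      s * v x y + (y:ℂ) * pdx v x y + pdy p x y
        = (1/(R:ℂ)) * lap v x y + G x y)
    (hsre : 0 ≤ s.re) :
    |s.im| * (nsq u + nsq v)
      ≤ (1 + Real.sqrt R) * (nsq u + nsq v)
        + (1 + Real.sqrt R) * (Real.sqrt (nsq u + nsq v) * Real.sqrt (nsq F + nsq G)) :=
  imaginary_part_estimate_general hR
    ⟨⟨hu.contDiff 2, hup, hub0, hub1⟩, ⟨hv.contDiff 2, hvp, hvb0, hvb1⟩, hp.contDiff 1, hpp,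
      (hF.contDiff 0).continuous, (hG.contDiff 0).continuous, fun x _ y _ => hdiv x y, heq1, heq2⟩
    hsre

end
end

section
/- There exists a constant C > 0, independent of R, k, s, F and G, such that sup_{y ∈ [0,1]} |g'(y)|² ≤ C·R²·(‖F‖² + ‖G‖²); in particular the boundary values satisfy |g'(0)|² ≤ C·R²·(‖F‖² + ‖G‖²) and |g'(1)|² ≤ C·R²·(‖F‖² + ‖G‖²). -/
open MeasureTheory Complex

noncomputable section

/-- Square of the L² norm over [0,1]. -/
def l2sq (f : ℝ → ℂ) : ℝ := ∫ y in (0:ℝ)..(1:ℝ), ‖f y‖ ^ 2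

/-- L² inner product over [0,1]. -/
def l2ip (f g : ℝ → ℂ) : ℂ := ∫ y in (0:ℝ)..(1:ℝ), (starRingEnd ℂ) (f y) * g y

/-! Pairing the equation for `h` with `h` and integrating by parts, the transport term `i k y h` is
skew and `Re s ≥ 0` has a good sign, so Young's inequality leaves
`‖h'‖² + k² ‖h‖² ≤ R² (‖F‖² + ‖G‖²)`; Poincaré's inequality then bounds `‖h‖²` by the same quantity.
Expanding `‖g'' - k² g‖²` and integrating by parts gives `‖g''‖ ≤ ‖h‖`. Finally `g'` has mean zero
because `g` vanishes at both endpoints, so `|g'| ≤ ∫ |g''| ≤ ‖g''‖` pointwise. -/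

section Interval

open Set
open scoped InnerProductSpace

variable {a b : ℝ}

lemma sq_integral_le_mul_integral_sq {u : ℝ → ℝ} (hab : a ≤ b) (hu : ContinuousOn u (Icc a b)) :
    (∫ x in a..b, u x) ^ 2 ≤ (b - a) * ∫ x in a..b, u x ^ 2 := by
  have integral_sq_sub (t : ℝ) : ∫ x in a..b, (t - u x) ^ 2 =
      (b - a) * (t * t) + (-2 * ∫ x in a..b, u x) * t + ∫ x in a..b, u x ^ 2 := by
    have expand (x : ℝ) : (t - u x) ^ 2 = t * t + -2 * t * u x + u x ^ 2 := by ring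
    simp only [expand]
    rw [intervalIntegral.integral_add, intervalIntegral.integral_add,
      intervalIntegral.integral_const, intervalIntegral.integral_const_mul, smul_eq_mul]
    · ring
    all_goals exact ContinuousOn.intervalIntegrable_of_Icc hab (by fun_prop)
  have discrim_nonpos := discrim_le_zero fun t ↦
    (intervalIntegral.integral_nonneg hab fun x _ ↦ sq_nonneg (t - u x)).trans_eq
      (integral_sq_sub t)
  rw [discrim] at discrim_nonpos
  linarith

section NormedSpace

variable {E : Type*} [NormedAddCommGroup E] [NormedSpace ℝ E] [CompleteSpace E]
  {f f' : ℝ → E} {x y : ℝ}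

lemma norm_sub_le_integral_norm_deriv (hf : ∀ t ∈ Icc a b, HasDerivAt f (f' t) t)
    (hf' : ContinuousOn f' (Icc a b)) (hx : x ∈ Icc a b) (hy : y ∈ Icc a b) :
    ‖f y - f x‖ ≤ ∫ t in a..b, ‖f' t‖ := by
  wlog hxy : x ≤ y generalizing x y
  · rw [norm_sub_rev]
    exact this hy hx (le_of_not_ge hxy)
  have subset : Icc x y ⊆ Icc a b := Icc_subset_Icc hx.1 hy.2
  have f'_integrable := (hf'.mono subset).intervalIntegrable_of_Icc (μ := volume) hxy
  have norm_integrable := hf'.norm.intervalIntegrable_of_Icc (μ := volume) (hx.1.trans hx.2)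
  calc ‖f y - f x‖ = ‖∫ t in x..y, f' t‖ := by
        rw [intervalIntegral.integral_eq_sub_of_hasDerivAt
          (fun t ht ↦ hf t (subset (uIcc_of_le hxy ▸ ht))) f'_integrable]
    _ ≤ ∫ t in x..y, ‖f' t‖ := intervalIntegral.norm_integral_le_integral_norm hxy
    _ ≤ ∫ t in a..b, ‖f' t‖ := intervalIntegral.integral_mono_interval hx.1 hxy hy.2
        (Filter.Eventually.of_forall fun t ↦ norm_nonneg (f' t)) norm_integrable

lemma norm_le_integral_norm_deriv_of_integral_eq_zero (hab : a < b)
    (hf : ∀ t ∈ Icc a b, HasDerivAt f (f' t) t) (hf' : ContinuousOn f' (Icc a b))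
    (mean_zero : ∫ t in a..b, f t = 0) (hy : y ∈ Icc a b) :
    ‖f y‖ ≤ ∫ t in a..b, ‖f' t‖ := by
  have f_integrable := (HasDerivAt.continuousOn hf).intervalIntegrable_of_Icc hab.le (μ := volume)
  have smul_eq_integral_sub : (b - a) • f y = ∫ x in a..b, (f y - f x) := by
    rw [intervalIntegral.integral_sub intervalIntegrable_const f_integrable, mean_zero,
      sub_zero, intervalIntegral.integral_const]
  have norm_integral_le : ‖∫ x in a..b, (f y - f x)‖ ≤ (∫ t in a..b, ‖f' t‖) * |b - a| :=
    intervalIntegral.norm_integral_le_of_norm_le_const fun x hx ↦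
      norm_sub_le_integral_norm_deriv hf hf' (Ioc_subset_Icc_self (uIoc_of_le hab.le ▸ hx)) hy
  rw [← smul_eq_integral_sub, norm_smul, Real.norm_eq_abs, mul_comm] at norm_integral_le
  exact le_of_mul_le_mul_right norm_integral_le (abs_pos.2 (sub_ne_zero.2 hab.ne'))

lemma integral_norm_sq_le_of_left_eq_zero (hab : a ≤ b)
    (hf : ∀ t ∈ Icc a b, HasDerivAt f (f' t) t) (hf' : ContinuousOn f' (Icc a b)) (ha : f a = 0) :
    ∫ t in a..b, ‖f t‖ ^ 2 ≤ (b - a) ^ 2 * ∫ t in a..b, ‖f' t‖ ^ 2 := by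
  have pointwise (t : ℝ) (ht : t ∈ Icc a b) :
      ‖f t‖ ^ 2 ≤ (b - a) * ∫ t in a..b, ‖f' t‖ ^ 2 := by
    have norm_le := norm_sub_le_integral_norm_deriv hf hf' (left_mem_Icc.2 hab) ht
    rw [ha, sub_zero] at norm_le
    exact (pow_le_pow_left₀ (norm_nonneg _) norm_le 2).trans
      (sq_integral_le_mul_integral_sq hab hf'.norm)
  have f_continuous := HasDerivAt.continuousOn hf
  calc ∫ t in a..b, ‖f t‖ ^ 2
      ≤ ∫ _ in a..b, (b - a) * ∫ t in a..b, ‖f' t‖ ^ 2 :=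
        intervalIntegral.integral_mono_on hab
          ((f_continuous.norm.pow 2).intervalIntegrable_of_Icc hab) intervalIntegrable_const
          pointwise
    _ = (b - a) ^ 2 * ∫ t in a..b, ‖f' t‖ ^ 2 := by
        rw [intervalIntegral.integral_const, smul_eq_mul]
        ring

end NormedSpace

section InnerProductSpace

variable {E : Type*} [NormedAddCommGroup E] [InnerProductSpace ℝ E]

lemma integral_inner_deriv_add_inner_eq_zero {f f' v v' : ℝ → E} (hab : a ≤ b)
    (hf : ∀ t ∈ Icc a b, HasDerivAt f (f' t) t) (hf' : ContinuousOn f' (Icc a b))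
    (hv : ∀ t ∈ Icc a b, HasDerivAt v (v' t) t) (hv' : ContinuousOn v' (Icc a b))
    (ha : f a = 0) (hb : f b = 0) :
    ∫ t in a..b, (⟪f t, v' t⟫_ℝ + ⟪f' t, v t⟫_ℝ) = 0 := by
  have f_continuous := HasDerivAt.continuousOn hf
  have v_continuous := HasDerivAt.continuousOn hv
  rw [intervalIntegral.integral_eq_sub_of_hasDerivAt (f := fun t ↦ ⟪f t, v t⟫_ℝ)]
  · simp only [ha, hb, inner_zero_left, sub_zero]
  · rw [uIcc_of_le hab]
    exact fun t ht ↦ (hf t ht).inner ℝ (hv t ht)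
  · exact ContinuousOn.intervalIntegrable_of_Icc hab (by fun_prop)

lemma integral_norm_deriv_deriv_sq_le_integral_norm_sub_smul_sq {g g' g'' : ℝ → E} {κ : ℝ}
    (hab : a ≤ b) (hκ : 0 ≤ κ) (hg : ∀ t ∈ Icc a b, HasDerivAt g (g' t) t)
    (hg' : ∀ t ∈ Icc a b, HasDerivAt g' (g'' t) t) (hg'' : ContinuousOn g'' (Icc a b))
    (ha : g a = 0) (hb : g b = 0) :
    ∫ t in a..b, ‖g'' t‖ ^ 2 ≤ ∫ t in a..b, ‖g'' t - κ • g t‖ ^ 2 := by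
  have g_continuous := HasDerivAt.continuousOn hg
  have g'_continuous := HasDerivAt.continuousOn hg'
  have by_parts := integral_inner_deriv_add_inner_eq_zero hab hg g'_continuous hg' hg'' ha hb
  have pointwise (t : ℝ) : ‖g'' t‖ ^ 2 ≤
      ‖g'' t - κ • g t‖ ^ 2 + 2 * κ * (⟪g t, g'' t⟫_ℝ + ⟪g' t, g' t⟫_ℝ) := by
    rw [norm_sub_sq_real, inner_smul_right, real_inner_comm, real_inner_self_eq_norm_sq]
    linarith [sq_nonneg ‖κ • g t‖, mul_nonneg hκ (sq_nonneg ‖g' t‖)]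
  calc ∫ t in a..b, ‖g'' t‖ ^ 2
      ≤ ∫ t in a..b, (‖g'' t - κ • g t‖ ^ 2 +
          2 * κ * (⟪g t, g'' t⟫_ℝ + ⟪g' t, g' t⟫_ℝ)) := by
        refine intervalIntegral.integral_mono_on hab ?_ ?_ fun t _ ↦ pointwise t
        all_goals exact ContinuousOn.intervalIntegrable_of_Icc hab (by fun_prop)
    _ = ∫ t in a..b, ‖g'' t - κ • g t‖ ^ 2 := by
        rw [intervalIntegral.integral_add, intervalIntegral.integral_const_mul, by_parts, mul_zero,
          add_zero]
        all_goals exact ContinuousOn.intervalIntegrable_of_Icc hab (by fun_prop)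

lemma norm_deriv_sq_le_integral_norm_sub_smul_sq [CompleteSpace E] {g g' g'' : ℝ → E} {κ y : ℝ}
    (hab : a < b) (hκ : 0 ≤ κ) (hg : ∀ t ∈ Icc a b, HasDerivAt g (g' t) t)
    (hg' : ∀ t ∈ Icc a b, HasDerivAt g' (g'' t) t) (hg'' : ContinuousOn g'' (Icc a b))
    (ha : g a = 0) (hb : g b = 0) (hy : y ∈ Icc a b) :
    ‖g' y‖ ^ 2 ≤ (b - a) * ∫ t in a..b, ‖g'' t - κ • g t‖ ^ 2 := by
  have g'_mean_zero : ∫ t in a..b, g' t = 0 := by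
    rw [intervalIntegral.integral_eq_sub_of_hasDerivAt (uIcc_of_le hab.le ▸ hg)
      ((HasDerivAt.continuousOn hg').intervalIntegrable_of_Icc hab.le), ha, hb, sub_zero]
  calc ‖g' y‖ ^ 2
      ≤ (∫ t in a..b, ‖g'' t‖) ^ 2 := by
        gcongr
        exact norm_le_integral_norm_deriv_of_integral_eq_zero hab hg' hg'' g'_mean_zero hy
    _ ≤ (b - a) * ∫ t in a..b, ‖g'' t‖ ^ 2 := sq_integral_le_mul_integral_sq hab.le hg''.norm
    _ ≤ (b - a) * ∫ t in a..b, ‖g'' t - κ • g t‖ ^ 2 :=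
        mul_le_mul_of_nonneg_left (integral_norm_deriv_deriv_sq_le_integral_norm_sub_smul_sq
          hab.le hκ hg hg' hg'' ha hb) (sub_nonneg.2 hab.le)

lemma two_mul_mul_inner_le (c : ℝ) (x y : E) :
    2 * (c * ⟪x, y⟫_ℝ) ≤ c ^ 2 * ‖x‖ ^ 2 + ‖y‖ ^ 2 := by
  have expand := norm_sub_sq_real (c • x) y
  rw [norm_smul, mul_pow, Real.norm_eq_abs, sq_abs, real_inner_smul_left] at expand
  linarith [sq_nonneg ‖c • x - y‖]

/- `w` is the zeroth-order term. Only its pairing with `h` matters, so the skew part of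
`(s + k² / R + i k U) h` has no effect on the estimate. -/
lemma energy_density_le_of_coercive {ν k : ℝ} {h h' h'' F F' G w : E} (hν : 0 ≤ ν)
    (coercive : ν * k ^ 2 * ‖h‖ ^ 2 ≤ ⟪h, w⟫_ℝ) (eqn : ν • h'' - w = F' - k • G) :
    ν ^ 2 * (‖h'‖ ^ 2 + k ^ 2 * ‖h‖ ^ 2) ≤
      ‖F‖ ^ 2 + ‖G‖ ^ 2 + 2 * ν * (⟪h, ν • h'' - F'⟫_ℝ + ⟪h', ν • h' - F⟫_ℝ) := by
  have young_F : 2 * (ν * ⟪h', F⟫_ℝ) ≤ ν ^ 2 * ‖h'‖ ^ 2 + ‖F‖ ^ 2 := two_mul_mul_inner_le ν h' F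
  have young_G : 2 * (ν * k * ⟪h, G⟫_ℝ) ≤ (ν * k) ^ 2 * ‖h‖ ^ 2 + ‖G‖ ^ 2 :=
    two_mul_mul_inner_le (ν * k) h G
  have rearranged : ν • h'' - F' = w - k • G := by
    rw [sub_eq_iff_eq_add.1 eqn]
    abel
  rw [rearranged, inner_sub_right, inner_sub_right, real_inner_smul_right, real_inner_smul_right,
    real_inner_self_eq_norm_sq]
  linarith [mul_le_mul_of_nonneg_left coercive hν]

lemma integral_energy_le_of_coercive {ν k : ℝ} {h h' h'' F F' G w : ℝ → E}
    (hab : a ≤ b) (hν : 0 ≤ ν)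
    (hh : ∀ t ∈ Icc a b, HasDerivAt h (h' t) t) (hh' : ∀ t ∈ Icc a b, HasDerivAt h' (h'' t) t)
    (hh'' : ContinuousOn h'' (Icc a b)) (ha : h a = 0) (hb : h b = 0)
    (hF : ∀ t ∈ Icc a b, HasDerivAt F (F' t) t) (hF' : ContinuousOn F' (Icc a b))
    (hG : ContinuousOn G (Icc a b))
    (coercive : ∀ t ∈ Icc a b, ν * k ^ 2 * ‖h t‖ ^ 2 ≤ ⟪h t, w t⟫_ℝ)
    (eqn : ∀ t ∈ Icc a b, ν • h'' t - w t = F' t - k • G t) :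
    ν ^ 2 * ((∫ t in a..b, ‖h' t‖ ^ 2) + k ^ 2 * ∫ t in a..b, ‖h t‖ ^ 2) ≤
      (∫ t in a..b, ‖F t‖ ^ 2) + ∫ t in a..b, ‖G t‖ ^ 2 := by
  have h_continuous := HasDerivAt.continuousOn hh
  have h'_continuous := HasDerivAt.continuousOn hh'
  have F_continuous := HasDerivAt.continuousOn hF
  have by_parts : ∫ t in a..b, (⟪h t, ν • h'' t - F' t⟫_ℝ + ⟪h' t, ν • h' t - F t⟫_ℝ) = 0 :=
    integral_inner_deriv_add_inner_eq_zero hab hh h'_continuous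
      (fun t ht ↦ ((hh' t ht).const_smul ν).sub (hF t ht)) (by fun_prop) ha hb
  calc ν ^ 2 * ((∫ t in a..b, ‖h' t‖ ^ 2) + k ^ 2 * ∫ t in a..b, ‖h t‖ ^ 2)
      = ∫ t in a..b, ν ^ 2 * (‖h' t‖ ^ 2 + k ^ 2 * ‖h t‖ ^ 2) := by
        rw [intervalIntegral.integral_const_mul, intervalIntegral.integral_add,
          intervalIntegral.integral_const_mul]
        all_goals exact ContinuousOn.intervalIntegrable_of_Icc hab (by fun_prop)
    _ ≤ ∫ t in a..b, (‖F t‖ ^ 2 + ‖G t‖ ^ 2 +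
          2 * ν * (⟪h t, ν • h'' t - F' t⟫_ℝ + ⟪h' t, ν • h' t - F t⟫_ℝ)) := by
        refine intervalIntegral.integral_mono_on hab ?_ ?_ fun t ht ↦
          energy_density_le_of_coercive hν (coercive t ht) (eqn t ht)
        all_goals exact ContinuousOn.intervalIntegrable_of_Icc hab (by fun_prop)
    _ = (∫ t in a..b, ‖F t‖ ^ 2) + ∫ t in a..b, ‖G t‖ ^ 2 := by
        rw [intervalIntegral.integral_add, intervalIntegral.integral_add,
          intervalIntegral.integral_const_mul, by_parts, mul_zero, add_zero]
        all_goals exact ContinuousOn.intervalIntegrable_of_Icc hab (by fun_prop)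

end InnerProductSpace

end Interval

lemma inner_mul_self_eq_re_mul_norm_sq (c z : ℂ) : inner ℝ z (c * z) = c.re * ‖z‖ ^ 2 := by
  rw [Complex.inner, mul_assoc, mul_conj', ← ofReal_pow, re_mul_ofReal]

lemma hasDerivAt_deriv_iteratedDeriv_two {E : Type*} [NormedAddCommGroup E] [NormedSpace ℝ E]
    {f : ℝ → E} (hf : ContDiff ℝ 2 f) (y : ℝ) :
    HasDerivAt (deriv f) (iteratedDeriv 2 f y) y := by
  rw [iteratedDeriv_succ, iteratedDeriv_one]
  exact (hf.differentiable_deriv_two y).hasDerivAt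

lemma l2sq_nonneg (f : ℝ → ℂ) : 0 ≤ l2sq f :=
  intervalIntegral.integral_nonneg zero_le_one fun _ _ ↦ sq_nonneg _

lemma l2sq_le_l2sq_deriv {f : ℝ → ℂ} (hf : ContDiff ℝ 1 f) (f_zero : f 0 = 0) :
    l2sq f ≤ l2sq (deriv f) := by
  have poincare := integral_norm_sq_le_of_left_eq_zero zero_le_one
    (fun y _ ↦ (hf.differentiable one_ne_zero y).hasDerivAt) hf.continuous_deriv_one.continuousOn
    f_zero
  rwa [sub_zero, one_pow, one_mul] at poincare

lemma l2sq_deriv_add_le_of_vorticity_eq {R k : ℝ} (hR : 0 < R) {s : ℂ} (hs : 0 ≤ s.re)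
    {U : ℝ → ℝ} {F G h : ℝ → ℂ} (hF : ContDiff ℝ 1 F) (hG : Continuous G) (hh : ContDiff ℝ 2 h)
    (h_zero : h 0 = 0) (h_one : h 1 = 0)
    (h_eqn : ∀ y ∈ Set.Icc (0 : ℝ) 1,
      (1 / (R : ℂ)) * iteratedDeriv 2 h y - (s + (k : ℂ) ^ 2 / (R : ℂ) + I * k * U y) * h y
        = deriv F y - I * k * G y) :
    l2sq (deriv h) + k ^ 2 * l2sq h ≤ R ^ 2 * (l2sq F + l2sq G) := by
  have coercive (y : ℝ) : R⁻¹ * k ^ 2 * ‖h y‖ ^ 2 ≤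
      inner ℝ (h y) ((s + (k : ℂ) ^ 2 / (R : ℂ) + I * k * U y) * h y) := by
    have re_eq : (s + (k : ℂ) ^ 2 / (R : ℂ) + I * k * U y).re = s.re + R⁻¹ * k ^ 2 := by
      simp [← ofReal_pow, div_ofReal_re, inv_mul_eq_div]
    rw [inner_mul_self_eq_re_mul_norm_sq, re_eq]
    gcongr
    exact le_add_of_nonneg_left hs
  have energy := integral_energy_le_of_coercive (k := k) (G := fun y ↦ I * G y) zero_le_one
    (inv_nonneg.2 hR.le) (fun y _ ↦ (hh.differentiable two_ne_zero y).hasDerivAt)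
    (fun y _ ↦ hasDerivAt_deriv_iteratedDeriv_two hh y)
    (hh.continuous_iteratedDeriv 2 le_rfl).continuousOn h_zero h_one
    (fun y _ ↦ (hF.differentiable one_ne_zero y).hasDerivAt)
    hF.continuous_deriv_one.continuousOn (by fun_prop) (fun y _ ↦ coercive y) fun y hy ↦ by
      rw [real_smul, real_smul, ofReal_inv]
      linear_combination h_eqn y hy
  simp only [norm_mul, norm_I, one_mul] at energy
  rwa [inv_pow, inv_mul_le_iff₀ (by positivity)] at energy

theorem boundary_derivative_estimate_general {R k : ℝ} (hR : 0 < R) {s : ℂ} (hs : 0 ≤ s.re)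
    {U : ℝ → ℝ} {F G h g : ℝ → ℂ} (hF : ContDiff ℝ 1 F) (hG : Continuous G)
    (hh : ContDiff ℝ 2 h) (h_zero : h 0 = 0) (h_one : h 1 = 0)
    (h_eqn : ∀ y ∈ Set.Icc (0 : ℝ) 1,
      (1 / (R : ℂ)) * iteratedDeriv 2 h y - (s + (k : ℂ) ^ 2 / (R : ℂ) + I * k * U y) * h y
        = deriv F y - I * k * G y)
    (hg : ContDiff ℝ 2 g) (g_zero : g 0 = 0) (g_one : g 1 = 0)
    (g_eqn : ∀ y ∈ Set.Icc (0 : ℝ) 1, iteratedDeriv 2 g y - (k : ℂ) ^ 2 * g y = h y)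
    (y : ℝ) (hy : y ∈ Set.Icc (0 : ℝ) 1) :
    ‖deriv g y‖ ^ 2 ≤ R ^ 2 * (l2sq F + l2sq G) := by
  have deriv_bound := norm_deriv_sq_le_integral_norm_sub_smul_sq zero_lt_one (sq_nonneg k)
    (fun t _ ↦ (hg.differentiable two_ne_zero t).hasDerivAt)
    (fun t _ ↦ hasDerivAt_deriv_iteratedDeriv_two hg t)
    (hg.continuous_iteratedDeriv 2 le_rfl).continuousOn g_zero g_one hy
  have integral_eq : ∫ t in (0 : ℝ)..1, ‖iteratedDeriv 2 g t - k ^ 2 • g t‖ ^ 2 = l2sq h := by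
    refine intervalIntegral.integral_congr fun t ht ↦ ?_
    rw [Set.uIcc_of_le zero_le_one] at ht
    simp only [← g_eqn t ht, real_smul, ofReal_pow]
  calc ‖deriv g y‖ ^ 2 ≤ l2sq h := by rwa [sub_zero, one_mul, integral_eq] at deriv_bound
    _ ≤ l2sq (deriv h) := l2sq_le_l2sq_deriv (hh.of_le one_le_two) h_zero
    _ ≤ l2sq (deriv h) + k ^ 2 * l2sq h :=
        le_add_of_nonneg_right (mul_nonneg (sq_nonneg k) (l2sq_nonneg h))
    _ ≤ R ^ 2 * (l2sq F + l2sq G) :=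
        l2sq_deriv_add_le_of_vorticity_eq hR hs hF hG hh h_zero h_one h_eqn

/-- pointwise bound for g' and its boundary values. -/
theorem boundary_derivative_estimate :
    ∃ C > (0:ℝ), ∀ (R : ℝ), 0 < R → ∀ (k : ℤ), 1 ≤ |k| → ∀ (s : ℂ), 0 ≤ s.re →
    ∀ (F G h g : ℝ → ℂ), ContDiff ℝ 1 F → Continuous G →
    ContDiff ℝ 2 h → h 0 = 0 → h 1 = 0 →
    (∀ y ∈ Set.Icc (0:ℝ) 1,
      (1/(R:ℂ)) * iteratedDeriv 2 h y
        - (s + (k:ℂ)^2 / (R:ℂ) + Complex.I * (k:ℂ) * (y:ℂ)) * h y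
        = deriv F y - Complex.I * (k:ℂ) * G y) →
    ContDiff ℝ 3 g → g 0 = 0 → g 1 = 0 →
    (∀ y ∈ Set.Icc (0:ℝ) 1, iteratedDeriv 2 g y - (k:ℂ)^2 * g y = h y) →
    (∀ y ∈ Set.Icc (0:ℝ) 1, ‖deriv g y‖^2 ≤ C * R^2 * (l2sq F + l2sq G))
      ∧ ‖deriv g 0‖^2 ≤ C * R^2 * (l2sq F + l2sq G)
      ∧ ‖deriv g 1‖^2 ≤ C * R^2 * (l2sq F + l2sq G) := by
  refine ⟨1, one_pos, fun R hR k _ s hs F G h g hF hG hh h0 h1 h_eqn hg g0 g1 g_eqn ↦ ?_⟩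
  have bound := boundary_derivative_estimate_general (k := k) (U := id) hR hs hF hG hh h0 h1
    (by simpa using h_eqn) (hg.of_le (by norm_num)) g0 g1 (by simpa using g_eqn)
  rw [one_mul]
  exact ⟨bound, bound 0 (by simp), bound 1 (by simp)⟩

end
end
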